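/- Given the setup (Ω, 𝓕, P, F, W), if I and J are both stochastic integral mappings from L² to C, then for every b ∈ L² the processes I(b) and J(b) are indistinguishable. -/

import Mathlib

/-!
Both mappings are given by the elementary formula on simple processes, and both are continuous for
convergence in probability. Hence it suffices to approximate `b ∈ L²` on `(0, u]`, for each
`u > 0`, by simple processes in `H²` with grids ending before `u` (`exists_simple_approx`). Limits
in probability are almost surely unique, so `I b u = J b u` almost surely for each `u > 0`;
intersecting over positive rational `u` and using path continuity gives indistinguishability.

The approximation must cope with processes that are only measurable and adapted, so running
averages of `b`, whose adaptedness would need progressive measurability, are avoided. Instead `b`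
is truncated to a bounded process `f` supported in `(0, u]`, and `f` is sampled at the left
endpoints of a grid of mesh `h` with offset `a ∈ (0, h)` (`sampled`). Up to two end pieces of
length at most `h`, the mean square error averaged over `a` is at most the average over
`r ∈ (0, h]` of the squared distance between `f` and its translate by `r` in `L²(ℝ × Ω)`, which is
small by continuity of translations. Some offset therefore does well (`exists_offset`,
`exists_simple_approx_bounded`). Letting the truncation level grow, with summable errors, gives
almost sure convergence of the time integrals, hence convergence in probability.
-/

open MeasureTheory Filter Set

variable {Ω : Type*} {mΩ : MeasurableSpace Ω}

/-- The filtration is augmented: each `F t` contains all `P`-null sets. -/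
def AugmentedFiltration (P : Measure Ω) (F : Filtration ℝ mΩ) : Prop :=
  ∀ t : ℝ, ∀ s : Set Ω, MeasurableSet s → P s = 0 → MeasurableSet[F t] s

/-- `W` is a standard Wiener process with respect to the filtration `F` under `P`. -/
def IsWienerProcess (P : Measure Ω) (F : Filtration ℝ mΩ) (W : ℝ → Ω → ℝ) : Prop :=
  (∀ ω, Continuous fun t => W t ω) ∧
  (∀ ω, W 0 ω = 0) ∧
  Adapted F W ∧
  ∀ s t : ℝ, 0 ≤ s → s ≤ t →
    ProbabilityTheory.Indep
      (MeasurableSpace.comap (fun ω => W t ω - W s ω) inferInstance) (F s) P ∧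
    Measure.map (fun ω => W t ω - W s ω) P
      = ProbabilityTheory.gaussianReal 0 (Real.toNNReal (t - s))

/-- `b` is a simple process with grid `0 = t 0 < t 1 < ⋯ < t n`. -/
def IsSimpleWith (F : Filtration ℝ mΩ) (b : ℝ → Ω → ℝ) (n : ℕ) (t : ℕ → ℝ) : Prop :=
  t 0 = 0 ∧ (∀ i < n, t i < t (i + 1)) ∧
  Measurable[F 0] (b 0) ∧
  (∀ i < n, Measurable[F (t i)] (b (t (i + 1)))) ∧
  ∀ s ω, b s ω =
    Set.indicator ({0} : Set ℝ) (fun _ => b 0 ω) s +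
      ∑ i ∈ Finset.range n,
        Set.indicator (Set.Ioc (t i) (t (i + 1))) (fun _ => b (t (i + 1)) ω) s

/-- `b` is a simple process. -/
def IsSimpleProcess (F : Filtration ℝ mΩ) (b : ℝ → Ω → ℝ) : Prop :=
  ∃ n t, IsSimpleWith F b n t

/-- `b ∈ L²`: measurable, adapted, and pathwise locally square integrable a.s. -/
def MemL2 (P : Measure Ω) (F : Filtration ℝ mΩ) (b : ℝ → Ω → ℝ) : Prop :=
  Measurable (Function.uncurry b) ∧ Adapted F b ∧
  ∀ t : ℝ, 0 ≤ t →
    ∀ᵐ ω ∂P, (∫⁻ s in Set.Ioc (0 : ℝ) t, ENNReal.ofReal ((b s ω) ^ 2)) < ⊤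

/-- `b ∈ H²`: measurable, adapted, locally square integrable in expectation. -/
def MemH2 (P : Measure Ω) (F : Filtration ℝ mΩ) (b : ℝ → Ω → ℝ) : Prop :=
  Measurable (Function.uncurry b) ∧ Adapted F b ∧
  ∀ t : ℝ, 0 ≤ t →
    (∫⁻ ω, ∫⁻ s in Set.Ioc (0 : ℝ) t, ENNReal.ofReal ((b s ω) ^ 2) ∂volume ∂P) < ⊤

/-- Elementary stochastic integral `∑ b(tᵢ)(W(tᵢ) − W(tᵢ₋₁))` of a simple process. -/
def ElemInt (W : ℝ → Ω → ℝ) (b : ℝ → Ω → ℝ) (n : ℕ) (t : ℕ → ℝ) (ω : Ω) : ℝ :=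
  ∑ i ∈ Finset.range n, b (t (i + 1)) ω * (W (t (i + 1)) ω - W (t i) ω)

/-- `I` is a stochastic integral mapping: it sends `L²` into the adapted continuous
processes, computes integrals of simple processes by the elementary formula, and is
continuous with respect to convergence in probability of the time integrals. -/
def IsStochasticIntegralMap (P : Measure Ω) (F : Filtration ℝ mΩ) (W : ℝ → Ω → ℝ)
    (I : (ℝ → Ω → ℝ) → ℝ → Ω → ℝ) : Prop :=
  (∀ b, MemL2 P F b → Adapted F (I b) ∧ ∀ ω, Continuous fun s => I b s ω) ∧
  (∀ b n t, MemL2 P F b → IsSimpleWith F b n t → ∀ u : ℝ, t n ≤ u →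
      ∀ᵐ ω ∂P, I b u ω = ElemInt W b n t ω) ∧
  (∀ u : ℝ, 0 ≤ u → ∀ b, MemL2 P F b → ∀ bs : ℕ → ℝ → Ω → ℝ,
      (∀ k, IsSimpleProcess F (bs k) ∧ MemH2 P F (bs k)) →
      TendstoInMeasure P
        (fun k ω => ∫ s in Set.Ioc (0 : ℝ) u, (b s ω - bs k s ω) ^ 2) atTop
        (fun _ => (0 : ℝ)) →
      TendstoInMeasure P (fun k ω => I (bs k) u ω) atTop (fun ω => I b u ω))

open scoped Topology ENNReal

/-! ### Continuity of translations in mean square -/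

/-- Continuity of translations in `L²(ℝ)`. -/
lemma tendsto_lintegral_sq_translate {φ : ℝ → ℝ} (hφ : MemLp φ 2 volume) :
    Tendsto (fun r : ℝ => ∫⁻ x, ENNReal.ofReal ((φ (x + r) - φ x) ^ 2)) (𝓝 0) (𝓝 0) := by
  have : Fact ((2 : ℝ≥0∞) ≠ ⊤) := ⟨by simp⟩
  have h1 : Tendsto (fun r : ℝ => DomAddAct.mk r +ᵥ hφ.toLp φ) (𝓝 0) (𝓝 (hφ.toLp φ)) := by
    have hc : Continuous fun r : ℝ => DomAddAct.mk r +ᵥ hφ.toLp φ :=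
      (DomAddAct.continuous_mk).vadd continuous_const
    have := hc.tendsto 0
    simpa using this
  simp only [DomAddAct.mk_vadd_toLp] at h1
  rw [Lp.tendsto_Lp_iff_tendsto_eLpNorm''] at h1
  have h2 := (ENNReal.continuous_pow 2).tendsto 0 |>.comp h1
  simp only [ne_eq, OfNat.ofNat_ne_zero, not_false_eq_true, zero_pow] at h2
  refine h2.congr fun r => ?_
  have := eLpNorm_nnreal_pow_eq_lintegral (μ := (volume : Measure ℝ)) (p := 2)
    (f := (fun x => φ (r +ᵥ x)) - φ) (by norm_num)
  simp only [Function.comp]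
  norm_num at this
  refine Eq.trans this (lintegral_congr fun x => ?_)
  rw [← ofReal_norm, ← ENNReal.ofReal_pow (norm_nonneg _)]
  simp [add_comm]

lemma lintegral_sq_le {f : ℝ → Ω → ℝ} {N T : ℝ}
    (hN : ∀ s ω, |f s ω| ≤ N) (hT : ∀ s, s ∉ Ioc 0 T → ∀ ω, f s ω = 0) (ω : Ω) :
    ∫⁻ s, ENNReal.ofReal (f s ω ^ 2) ≤ ENNReal.ofReal (N ^ 2) * ENNReal.ofReal T := by
  calc ∫⁻ s, ENNReal.ofReal (f s ω ^ 2)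
      ≤ ∫⁻ s, (Ioc 0 T).indicator (fun _ => ENNReal.ofReal (N ^ 2)) s := by
        refine lintegral_mono fun s => ?_
        by_cases hs : s ∈ Ioc 0 T
        · rw [indicator_of_mem hs]
          exact ENNReal.ofReal_le_ofReal (sq_le_sq' (abs_le.1 (hN s ω)).1 (abs_le.1 (hN s ω)).2)
        · simp [hT s hs ω]
    _ = _ := by simp

/-- Continuity of translations in `L²(ℝ × Ω)`, for bounded processes supported in `(0, T]`: it holds
path by path, and the path integrals are dominated by a constant. -/
lemma tendsto_lintegral_lintegral_sq_translate (P : Measure Ω) [IsProbabilityMeasure P]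
    {f : ℝ → Ω → ℝ} {N T : ℝ} (hf : Measurable (Function.uncurry f))
    (hN : ∀ s ω, |f s ω| ≤ N) (hT : ∀ s, s ∉ Ioc 0 T → ∀ ω, f s ω = 0) :
    Tendsto (fun r : ℝ => ∫⁻ ω, ∫⁻ x, ENNReal.ofReal ((f (x + r) ω - f x ω) ^ 2) ∂volume ∂P)
      (𝓝 0) (𝓝 0) := by
  have hfω : ∀ ω, Measurable fun s => f s ω := fun ω => 
    hf.comp (g := Function.uncurry f) (f := fun s : ℝ => (s, ω)) (by fun_prop)
  have key := tendsto_lintegral_filter_of_dominated_convergence (μ := P) (l := 𝓝 (0 : ℝ))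
    (F := fun r ω => ∫⁻ x, ENNReal.ofReal ((f (x + r) ω - f x ω) ^ 2)) (f := fun _ => 0)
    (fun _ => 4 * (ENNReal.ofReal (N ^ 2) * ENNReal.ofReal T)) ?_ ?_ ?_ ?_
  · simpa using key
  · refine Eventually.of_forall fun r => ?_
    refine Measurable.lintegral_prod_right' (f := fun p : Ω × ℝ =>
      ENNReal.ofReal ((f (p.2 + r) p.1 - f p.2 p.1) ^ 2)) ?_
    have h1 : Measurable fun p : Ω × ℝ => f (p.2 + r) p.1 :=
      hf.comp (g := Function.uncurry f) (f := fun p : Ω × ℝ => (p.2 + r, p.1)) (by fun_prop)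
    have h2 : Measurable fun p : Ω × ℝ => f p.2 p.1 :=
      hf.comp (g := Function.uncurry f) (f := fun p : Ω × ℝ => (p.2, p.1)) (by fun_prop)
    fun_prop
  · refine Eventually.of_forall fun r => Eventually.of_forall fun ω => ?_
    have hω := hfω ω
    calc ∫⁻ x, ENNReal.ofReal ((f (x + r) ω - f x ω) ^ 2)
        ≤ ∫⁻ x, (2 * ENNReal.ofReal (f (x + r) ω ^ 2) + 2 * ENNReal.ofReal (f x ω ^ 2)) := by
          refine lintegral_mono fun x => ?_
          rw [← ENNReal.ofReal_ofNat 2, ← ENNReal.ofReal_mul (by norm_num),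
            ← ENNReal.ofReal_mul (by norm_num), ← ENNReal.ofReal_add (by positivity) (by positivity)]
          exact ENNReal.ofReal_le_ofReal (by nlinarith [sq_nonneg (f (x + r) ω + f x ω)])
      _ = 2 * (∫⁻ x, ENNReal.ofReal (f (x + r) ω ^ 2)) + 2 * ∫⁻ x, ENNReal.ofReal (f x ω ^ 2) := by
          rw [lintegral_add_left (by fun_prop), lintegral_const_mul _ (by fun_prop),
            lintegral_const_mul _ (by fun_prop)]
      _ = 4 * ∫⁻ x, ENNReal.ofReal (f x ω ^ 2) := by
          rw [lintegral_add_right_eq_self (fun x => ENNReal.ofReal (f x ω ^ 2)) r]; ring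
      _ ≤ _ := by gcongr; exact lintegral_sq_le hN hT ω
  · simp [ENNReal.mul_eq_top]
  · refine Eventually.of_forall fun ω =>
      tendsto_lintegral_sq_translate (φ := fun s => f s ω) ?_
    refine ⟨(hfω ω).aestronglyMeasurable, ?_⟩
    have := eLpNorm_nnreal_pow_eq_lintegral (μ := (volume : Measure ℝ)) (p := 2)
      (f := fun x => f x ω) (by norm_num)
    norm_num at this
    have h2 : eLpNorm (fun x => f x ω) 2 volume ^ 2 < ⊤ := by
      rw [this]
      refine lt_of_le_of_lt (le_of_eq ?_) (lt_of_le_of_lt (lintegral_sq_le hN hT ω)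
        (ENNReal.mul_lt_top ENNReal.ofReal_lt_top ENNReal.ofReal_lt_top))
      refine lintegral_congr fun x => ?_
      rw [← ofReal_norm, ← ENNReal.ofReal_pow (norm_nonneg _)]
      simp
    simpa using h2

/-! ### Choice of the grid offset -/

/-- First moment argument for the offset of a grid of mesh `h`. When the offset `a` is uniform on
`(0, h)`, the points `a + j * h` sweep out disjoint intervals, so the mean of the sum over the grid
is at most `h⁻¹ ∫_{r ∈ (0, h]} ∫ G (x, r) dx dr ≤ C`, and some offset does no worse. -/
lemma exists_offset {G : ℝ × ℝ → ℝ≥0∞} (hG : Measurable G) {h : ℝ} (hh : 0 < h) (n : ℕ)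
    {C : ℝ≥0∞} (hC : ∀ r ∈ Ioc 0 h, ∫⁻ x, G (x, r) ≤ C) :
    ∃ a ∈ Ioo 0 h, ∑ j ∈ Finset.range n, ∫⁻ r in Ioc 0 h, G (a + j * h, r) ≤ C := by
  have hm : Measurable fun a : ℝ =>
      ∑ j ∈ Finset.range n, ∫⁻ r in Ioc 0 h, G (a + j * h, r) := by
    refine Finset.measurable_sum _ fun j _ => ?_
    exact Measurable.lintegral_prod_right' (f := fun p : ℝ × ℝ => G (p.1 + j * h, p.2))
      (by fun_prop)
  have hv : (volume : Measure ℝ) (Ioo 0 h) = ENNReal.ofReal h := by simp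
  have hv0 : ENNReal.ofReal h ≠ 0 := by simpa using hh
  obtain ⟨a, ha, hle⟩ := exists_le_setLAverage (μ := (volume : Measure ℝ)) (s := Ioo 0 h)
    (by rw [hv]; exact hv0) (by rw [hv]; simp) hm.aemeasurable
  refine ⟨a, ha, hle.trans ?_⟩
  rw [setLAverage_eq, hv]
  refine ENNReal.div_le_of_le_mul ?_
  calc ∫⁻ a in Ioo 0 h, ∑ j ∈ Finset.range n, ∫⁻ r in Ioc 0 h, G (a + j * h, r)
      = ∑ j ∈ Finset.range n, ∫⁻ a in Ioo 0 h, ∫⁻ r in Ioc 0 h, G (a + j * h, r) := by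
        refine lintegral_finsetSum _ fun j _ => ?_
        exact Measurable.lintegral_prod_right' (f := fun p : ℝ × ℝ => G (p.1 + j * h, p.2))
          (by fun_prop)
    _ = ∑ j ∈ Finset.range n, ∫⁻ r in Ioc 0 h, ∫⁻ a in Ioo 0 h, G (a + j * h, r) := by
        refine Finset.sum_congr rfl fun j _ => ?_
        exact lintegral_lintegral_swap (f := fun a r => G (a + j * h, r))
          (Measurable.aemeasurable (by fun_prop))
    _ = ∫⁻ r in Ioc 0 h, ∑ j ∈ Finset.range n, ∫⁻ a in Ioo 0 h, G (a + j * h, r) := by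
        refine (lintegral_finsetSum _ fun j _ => ?_).symm
        exact Measurable.lintegral_prod_right' (f := fun p : ℝ × ℝ => G (p.2 + j * h, p.1))
          (by fun_prop)
    _ ≤ ∫⁻ r in Ioc 0 h, C := by
        refine setLIntegral_mono measurable_const fun r hr => ?_
        refine le_trans ?_ (hC r hr)
        have hshift : ∀ j : ℕ, ∫⁻ a in Ioo 0 h, G (a + j * h, r)
            = ∫⁻ x in Ioo (j * h) ((j + 1 : ℕ) * h), G (x, r) := by
          intro j
          have := (measurePreserving_add_right (volume : Measure ℝ) (j * h)).setLIntegral_comp_preimage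
            (s := Ioo (j * h) ((j + 1 : ℕ) * h)) (f := fun x => G (x, r)) measurableSet_Ioo
            (by fun_prop)
          rw [← this]
          congr 2
          ext x
          simp only [mem_Ioo, mem_preimage]; push_cast
          constructor <;> rintro ⟨h1, h2⟩ <;> constructor <;> linarith
        simp_rw [hshift]
        rw [← lintegral_biUnion_finset (t := fun j : ℕ => Ioo (j * h) ((j + 1 : ℕ) * h))]
        · exact setLIntegral_le_lintegral _ _
        · have hmono : Monotone fun j : ℕ => (j : ℝ) * h := fun i j hij => by
            simp only; gcongr
          exact (hmono.pairwise_disjoint_on_Ioo_succ).set_pairwise _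
        · intro _ _; exact measurableSet_Ioo
    _ = C * ENNReal.ofReal h := by simp

/-! ### Sampling a process along a grid -/

/-- The process which holds the value `f (a + j * h)` on the cell `(a + j * h, a + (j + 1) * h]`
for `j < n`, and vanishes outside these `n` cells. The value on a cell is that of `f` at its left
endpoint, so adaptedness of `f` makes this a simple process. -/
noncomputable def sampled (f : ℝ → Ω → ℝ) (a h : ℝ) (n : ℕ) (s : ℝ) (ω : Ω) : ℝ :=
  ∑ j ∈ Finset.range n,
    (Ioc (a + (j : ℕ) * h) (a + ((j + 1 : ℕ) : ℝ) * h)).indicator (fun _ => f (a + j * h) ω) s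

/-- The grid `0, a, a + h, a + 2 * h, …` of the sampled process. -/
noncomputable def offsetGrid (a h : ℝ) : ℕ → ℝ
  | 0 => 0
  | i + 1 => a + i * h

lemma sampled_of_mem {f : ℝ → Ω → ℝ} {a h : ℝ} (hh : 0 < h) {n j : ℕ} (hj : j < n) {s : ℝ}
    (hs : s ∈ Ioc (a + j * h) (a + ((j + 1 : ℕ) : ℝ) * h)) (ω : Ω) :
    sampled f a h n s ω = f (a + j * h) ω := by
  have hmono : Monotone fun j : ℕ => a + (j : ℝ) * h := fun i j hij => by
    simp only; gcongr
  unfold sampled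
  rw [Finset.sum_eq_single_of_mem j (Finset.mem_range.2 hj), indicator_of_mem hs]
  intro i _ hij
  refine indicator_of_notMem (fun hi => ?_) _
  exact Set.disjoint_left.1 (hmono.pairwise_disjoint_on_Ioc_succ hij) hi hs

lemma sampled_of_notMem {f : ℝ → Ω → ℝ} {a h : ℝ} {n : ℕ} {s : ℝ}
    (hs : ∀ j < n, s ∉ Ioc (a + j * h) (a + ((j + 1 : ℕ) : ℝ) * h)) (ω : Ω) :
    sampled f a h n s ω = 0 :=
  Finset.sum_eq_zero fun j hj => indicator_of_notMem (hs j (Finset.mem_range.1 hj)) _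

lemma sampled_of_le {f : ℝ → Ω → ℝ} {a h : ℝ} (hh : 0 < h) {n : ℕ} {s : ℝ} (hs : s ≤ a)
    (ω : Ω) : sampled f a h n s ω = 0 := by
  refine sampled_of_notMem (fun j _ hj => ?_) ω
  have : 0 ≤ (j : ℝ) * h := by positivity
  linarith [hj.1]

lemma sampled_of_lt {f : ℝ → Ω → ℝ} {a h : ℝ} (hh : 0 < h) {n : ℕ} {s : ℝ} (hs : a + n * h < s)
    (ω : Ω) : sampled f a h n s ω = 0 := by
  refine sampled_of_notMem (fun j hjn hj => ?_) ω
  have : ((j + 1 : ℕ) : ℝ) * h ≤ n * h := by gcongr; exact hjn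
  linarith [hj.2]

lemma isSimpleWith_sampled {F : Filtration ℝ mΩ} {f : ℝ → Ω → ℝ} (hf : Adapted F f)
    {a h : ℝ} (ha : 0 < a) (hh : 0 < h) (n : ℕ) :
    IsSimpleWith F (sampled f a h n) (n + 1) (offsetGrid a h) := by
  have hfirst : ∀ s ≤ a, sampled f a h n s = fun _ => 0 := fun s hs =>
    funext fun ω => sampled_of_le hh hs ω
  have hnode : ∀ j < n, sampled f a h n (a + ((j + 1 : ℕ) : ℝ) * h) = f (a + j * h) :=
    fun j hj => funext fun ω => sampled_of_mem hh hj (by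
      refine ⟨?_, le_rfl⟩
      push_cast; linarith) ω
  refine ⟨rfl, ?_, ?_, ?_, ?_⟩
  · rintro (_ | i) _
    · simpa [offsetGrid] using ha
    · simp only [offsetGrid]; push_cast; linarith
  · rw [hfirst 0 ha.le]; exact measurable_const
  · rintro (_ | i) hi
    · rw [show offsetGrid a h (0 + 1) = a by simp [offsetGrid], hfirst a le_rfl]
      exact measurable_const
    · simp only [offsetGrid]
      rw [hnode i (by omega)]
      exact hf _
  · intro s ω
    rw [Finset.sum_range_succ']
    simp only [offsetGrid]
    rw [show a + ((0 : ℕ) : ℝ) * h = a by simp, hfirst 0 ha.le, hfirst a le_rfl]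
    simp only [indicator_zero, add_zero, zero_add]
    unfold sampled
    refine Finset.sum_congr rfl fun j hj => ?_
    have := congrFun (hnode j (Finset.mem_range.1 hj)) ω
    unfold sampled at this
    rw [this]

lemma abs_sampled_le {f : ℝ → Ω → ℝ} {N : ℝ} (hN : ∀ s ω, |f s ω| ≤ N) {a h : ℝ} (hh : 0 < h)
    (n : ℕ) (s : ℝ) (ω : Ω) : |sampled f a h n s ω| ≤ N := by
  by_cases hs : ∃ j < n, s ∈ Ioc (a + j * h) (a + ((j + 1 : ℕ) : ℝ) * h)
  · obtain ⟨j, hj, hs⟩ := hs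
    rw [sampled_of_mem hh hj hs]; exact hN _ _
  · push Not at hs
    rw [sampled_of_notMem hs, abs_zero]
    exact (abs_nonneg _).trans (hN 0 ω)

lemma memH2_sampled (P : Measure Ω) [IsProbabilityMeasure P] {F : Filtration ℝ mΩ}
    {f : ℝ → Ω → ℝ} (hf : Adapted F f) {N : ℝ} (hN : ∀ s ω, |f s ω| ≤ N) {a h : ℝ}
    (hh : 0 < h) (n : ℕ) : MemH2 P F (sampled f a h n) := by
  refine ⟨?_, fun s => ?_, fun t _ => ?_⟩
  · unfold sampled Function.uncurry
    refine Finset.measurable_sum _ fun j _ => ?_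
    have h1 : Measurable fun p : ℝ × Ω => f (a + j * h) p.2 :=
      ((hf (a + j * h)).mono (F.le _) le_rfl).comp measurable_snd
    exact h1.indicator (s := Prod.fst ⁻¹' Ioc (a + (j : ℕ) * h) (a + ((j + 1 : ℕ) : ℝ) * h))
      (measurable_fst measurableSet_Ioc)
  · unfold sampled
    refine Finset.measurable_sum _ fun j _ => ?_
    by_cases hs : s ∈ Ioc (a + j * h) (a + ((j + 1 : ℕ) : ℝ) * h)
    · simp only [indicator_of_mem hs]
      exact (hf _).mono (F.mono hs.1.le) le_rfl
    · simp only [indicator_of_notMem hs]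
      exact measurable_const
  · calc ∫⁻ ω, ∫⁻ s in Ioc 0 t, ENNReal.ofReal (sampled f a h n s ω ^ 2) ∂volume ∂P
        ≤ ∫⁻ ω, ∫⁻ s in Ioc 0 t, ENNReal.ofReal (N ^ 2) ∂volume ∂P := by
          refine lintegral_mono fun ω => lintegral_mono fun s => ENNReal.ofReal_le_ofReal ?_
          have := abs_le.1 (abs_sampled_le hN (a := a) hh n s ω)
          exact sq_le_sq' this.1 this.2
      _ < ⊤ := by simp [ENNReal.mul_lt_top]

lemma MemH2.memL2 {P : Measure Ω} {F : Filtration ℝ mΩ} {b : ℝ → Ω → ℝ}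
    (hb : MemH2 P F b) : MemL2 P F b := by
  refine ⟨hb.1, hb.2.1, fun t ht => ae_lt_top ?_ (hb.2.2 t ht).ne⟩
  have := hb.1
  refine Measurable.lintegral_prod_right' (f := fun p : Ω × ℝ => ENNReal.ofReal (b p.2 p.1 ^ 2)) ?_
  have h2 : Measurable fun p : Ω × ℝ => b p.2 p.1 :=
    hb.1.comp (g := Function.uncurry b) (f := fun p : Ω × ℝ => (p.2, p.1)) (by fun_prop)
  fun_prop

/-- Pathwise sampling error. The sampled process vanishes on the two end pieces `(0, a]` and
`(a + n * h, T]`, each of length at most `h`; they account for the term `2 * N ^ 2 * h`. -/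
lemma lintegral_sub_sampled_le {f : ℝ → Ω → ℝ} (hf : Measurable (Function.uncurry f)) {N : ℝ}
    (hN : ∀ s ω, |f s ω| ≤ N) {a h T : ℝ} (n : ℕ) (ha : a ∈ Ioo 0 h) (hT : T = (n + 1) * h)
    (ω : Ω) :
    ∫⁻ s in Ioc 0 T, ENNReal.ofReal ((f s ω - sampled f a h n s ω) ^ 2) ≤
      2 * (ENNReal.ofReal (N ^ 2) * ENNReal.ofReal h) + ∑ j ∈ Finset.range n,
        ∫⁻ r in Ioc 0 h, ENNReal.ofReal ((f (a + j * h + r) ω - f (a + j * h) ω) ^ 2) := by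
  have hh : 0 < h := ha.1.trans ha.2
  have hfω : Measurable fun s => f s ω :=
    hf.comp (g := Function.uncurry f) (f := fun s : ℝ => (s, ω)) (by fun_prop)
  have hedge : ∀ c d : ℝ, d - c ≤ h → (∀ s ∈ Ioc c d, sampled f a h n s ω = 0) →
      ∫⁻ s in Ioc c d, ENNReal.ofReal ((f s ω - sampled f a h n s ω) ^ 2) ≤
        ENNReal.ofReal (N ^ 2) * ENNReal.ofReal h := by
    intro c d hcd h0
    calc _ ≤ ∫⁻ s in Ioc c d, ENNReal.ofReal (N ^ 2) := by
          refine setLIntegral_mono measurable_const fun s hs => ?_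
          rw [h0 s hs, sub_zero]
          exact ENNReal.ofReal_le_ofReal (sq_le_sq' (abs_le.1 (hN s ω)).1 (abs_le.1 (hN s ω)).2)
      _ ≤ _ := by simp only [setLIntegral_const, Real.volume_Ioc]; gcongr
  have hcell : ∀ j < n, ∫⁻ s in Ioc (a + j * h) (a + ((j + 1 : ℕ) : ℝ) * h),
        ENNReal.ofReal ((f s ω - sampled f a h n s ω) ^ 2) =
      ∫⁻ r in Ioc 0 h, ENNReal.ofReal ((f (a + j * h + r) ω - f (a + j * h) ω) ^ 2) := by
    intro j hj
    rw [setLIntegral_congr_fun (g := fun s => ENNReal.ofReal ((f s ω - f (a + j * h) ω) ^ 2))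
      measurableSet_Ioc (fun s hs => by simp only; rw [sampled_of_mem hh hj hs])]
    rw [← (measurePreserving_add_left (volume : Measure ℝ) (a + j * h)).setLIntegral_comp_preimage
      measurableSet_Ioc (by fun_prop)]
    congr 2
    ext x
    simp only [mem_Ioc, mem_preimage]; push_cast
    constructor <;> rintro ⟨h1, h2⟩ <;> constructor <;> linarith
  have hind : ∀ m ≤ n, ∫⁻ s in Ioc 0 (a + m * h),
        ENNReal.ofReal ((f s ω - sampled f a h n s ω) ^ 2) ≤
      ENNReal.ofReal (N ^ 2) * ENNReal.ofReal h + ∑ j ∈ Finset.range m,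
        ∫⁻ r in Ioc 0 h, ENNReal.ofReal ((f (a + j * h + r) ω - f (a + j * h) ω) ^ 2) := by
    intro m
    induction m with
    | zero =>
      intro _
      simpa using hedge 0 a (by linarith [ha.2]) fun s hs => sampled_of_le hh hs.2 ω
    | succ m ih =>
      intro hm
      have h0 : 0 ≤ (m : ℝ) * h := by positivity
      rw [← Ioc_union_Ioc_eq_Ioc (b := a + m * h) (by linarith [ha.1])
        (by push_cast; linarith), Finset.sum_range_succ, ← add_assoc]
      refine (lintegral_union_le _ _ _).trans ?_
      rw [hcell m hm]
      gcongr
      exact ih (by omega)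
  have h0 : 0 ≤ (n : ℝ) * h := by positivity
  rw [← Ioc_union_Ioc_eq_Ioc (b := a + n * h) (c := T) (by linarith [ha.1])
    (by rw [hT]; linarith [ha.2]), two_mul, add_right_comm]
  refine (lintegral_union_le _ _ _).trans ?_
  gcongr
  · exact hind n le_rfl
  · exact hedge _ _ (by rw [hT]; linarith [ha.1]) fun s hs => sampled_of_lt hh hs.1 ω

/-- A bounded measurable adapted process supported in `(0, T]` is a limit in mean square of its
samplings along grids of mesh `T / (n + 1)` with suitable offsets. -/
lemma exists_simple_approx_bounded (P : Measure Ω) [IsProbabilityMeasure P] {F : Filtration ℝ mΩ}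
    {f : ℝ → Ω → ℝ} {N T : ℝ} (hT0 : 0 < T) (hf : Measurable (Function.uncurry f))
    (hfa : Adapted F f) (hN : ∀ s ω, |f s ω| ≤ N) (hT : ∀ s, s ∉ Ioc 0 T → ∀ ω, f s ω = 0)
    {ε : ℝ≥0∞} (hε : ε ≠ 0) :
    ∃ g : ℝ → Ω → ℝ, MemH2 P F g ∧ (∃ n t, IsSimpleWith F g n t ∧ t n ≤ T) ∧
      ∫⁻ ω, ∫⁻ s in Ioc 0 T, ENNReal.ofReal ((f s ω - g s ω) ^ 2) ∂volume ∂P ≤ ε := by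
  have hε2 : 0 < ε / 2 := ENNReal.half_pos hε
  have htr := (tendsto_lintegral_lintegral_sq_translate P hf hN hT).eventually
    (Iic_mem_nhds hε2)
  obtain ⟨δ, hδ, hball⟩ := Metric.eventually_nhds_iff.1 htr
  have hlim : Tendsto (fun n : ℕ => T / ((n : ℝ) + 1)) atTop (𝓝 0) := by
    have := (tendsto_one_div_add_atTop_nhds_zero_nat (𝕜 := ℝ)).const_mul T
    simpa [div_eq_mul_inv] using this
  have hlim2 : Tendsto (fun n : ℕ => 2 * (ENNReal.ofReal (N ^ 2) *
      ENNReal.ofReal (T / ((n : ℝ) + 1)))) atTop (𝓝 0) := by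
    have h1 := ENNReal.tendsto_ofReal hlim
    have h2 := ENNReal.Tendsto.const_mul (a := 2) (ENNReal.Tendsto.const_mul
      (a := ENNReal.ofReal (N ^ 2)) h1 (by simp)) (by simp)
    simpa using h2
  obtain ⟨n, hn1, hn2⟩ := ((hlim.eventually (gt_mem_nhds hδ)).and
    (hlim2.eventually (Iic_mem_nhds hε2))).exists
  set h := T / ((n : ℝ) + 1) with hh_def
  have hh : 0 < h := by positivity
  have hTh : T = (n + 1) * h := by rw [hh_def]; field_simp
  have hm3 : Measurable fun q : (ℝ × ℝ) × Ω =>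
      ENNReal.ofReal ((f (q.1.1 + q.1.2) q.2 - f q.1.1 q.2) ^ 2) := by
    have h1 : Measurable fun q : (ℝ × ℝ) × Ω => f (q.1.1 + q.1.2) q.2 :=
      hf.comp (g := Function.uncurry f) (f := fun q : (ℝ × ℝ) × Ω => (q.1.1 + q.1.2, q.2))
        (by fun_prop)
    have h2 : Measurable fun q : (ℝ × ℝ) × Ω => f q.1.1 q.2 :=
      hf.comp (g := Function.uncurry f) (f := fun q : (ℝ × ℝ) × Ω => (q.1.1, q.2)) (by fun_prop)
    fun_prop
  have hG : Measurable fun p : ℝ × ℝ =>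
      ∫⁻ ω, ENNReal.ofReal ((f (p.1 + p.2) ω - f p.1 ω) ^ 2) ∂P :=
    hm3.lintegral_prod_right'
  obtain ⟨a, ha, hsum⟩ := exists_offset hG hh n (C := ε / 2) (by
    intro r hr
    rw [lintegral_lintegral_swap]
    · refine hball ?_
      rw [Real.dist_eq, sub_zero, abs_of_pos hr.1]
      exact hr.2.trans_lt hn1
    · exact (hm3.comp (f := fun q : ℝ × Ω => ((q.1, r), q.2)) (by fun_prop)).aemeasurable)
  refine ⟨sampled f a h n, memH2_sampled P hfa hN hh n,
    ⟨n + 1, offsetGrid a h, isSimpleWith_sampled hfa ha.1 hh n, ?_⟩, ?_⟩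
  · simp only [offsetGrid]; rw [hTh]; linarith [ha.2]
  have hmj : ∀ j : ℕ, Measurable fun q : Ω × ℝ =>
      ENNReal.ofReal ((f (a + j * h + q.2) q.1 - f (a + j * h) q.1) ^ 2) := fun j =>
    hm3.comp (f := fun q : Ω × ℝ => ((a + j * h, q.2), q.1)) (by fun_prop)
  calc _ ≤ ∫⁻ ω, (2 * (ENNReal.ofReal (N ^ 2) * ENNReal.ofReal h) + ∑ j ∈ Finset.range n,
        ∫⁻ r in Ioc 0 h, ENNReal.ofReal ((f (a + j * h + r) ω - f (a + j * h) ω) ^ 2)) ∂P :=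
        lintegral_mono fun ω => lintegral_sub_sampled_le hf hN n ha hTh ω
    _ = 2 * (ENNReal.ofReal (N ^ 2) * ENNReal.ofReal h) + ∑ j ∈ Finset.range n,
        ∫⁻ r in Ioc 0 h,
          ∫⁻ ω, ENNReal.ofReal ((f (a + j * h + r) ω - f (a + j * h) ω) ^ 2) ∂P := by
        rw [lintegral_add_left measurable_const, lintegral_const, measure_univ, mul_one,
          lintegral_finsetSum _ fun j _ => (hmj j).lintegral_prod_right']
        congr 1
        refine Finset.sum_congr rfl fun j _ => ?_
        exact lintegral_lintegral_swap (hmj j).aemeasurable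
    _ ≤ ε / 2 + ε / 2 := add_le_add hn2 hsum
    _ = ε := ENNReal.add_halves ε

/-! ### Truncation and approximation of processes in `L²` -/

/-- The process `b` clipped to the range `[-k, k]` and set to zero outside `(0, T]`. -/
noncomputable def truncate (b : ℝ → Ω → ℝ) (T : ℝ) (k : ℕ) (s : ℝ) (ω : Ω) : ℝ :=
  (Ioc 0 T).indicator (fun s => max (-(k : ℝ)) (min (b s ω) k)) s

lemma abs_truncate_le (b : ℝ → Ω → ℝ) (T : ℝ) (k : ℕ) (s : ℝ) (ω : Ω) :
    |truncate b T k s ω| ≤ k := by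
  unfold truncate
  by_cases hs : s ∈ Ioc 0 T
  · rw [indicator_of_mem hs, abs_le]
    exact ⟨le_max_left _ _, max_le (by linarith [k.cast_nonneg (α := ℝ)]) (min_le_right _ _)⟩
  · simp [indicator_of_notMem hs]

lemma measurable_truncate {b : ℝ → Ω → ℝ} (hb : Measurable (Function.uncurry b)) (T : ℝ) (k : ℕ) :
    Measurable (Function.uncurry (truncate b T k)) := by
  have h1 : Measurable fun p : ℝ × Ω => max (-(k : ℝ)) (min (Function.uncurry b p) k) := by fun_prop
  exact h1.indicator (s := Prod.fst ⁻¹' Ioc 0 T) (measurable_fst measurableSet_Ioc)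

lemma adapted_truncate {F : Filtration ℝ mΩ} {b : ℝ → Ω → ℝ} (hb : Adapted F b) (T : ℝ) (k : ℕ) :
    Adapted F (truncate b T k) := by
  intro s
  unfold truncate
  by_cases hs : s ∈ Ioc 0 T
  · simp only [indicator_of_mem hs]
    have := hb s
    fun_prop
  · simp only [indicator_of_notMem hs]
    exact measurable_const

lemma sq_sub_truncate_le (b : ℝ → Ω → ℝ) (T : ℝ) (k : ℕ) (s : ℝ) (ω : Ω) :
    (b s ω - truncate b T k s ω) ^ 2 ≤ b s ω ^ 2 := by
  have hk : (0 : ℝ) ≤ k := k.cast_nonneg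
  unfold truncate
  by_cases hs : s ∈ Ioc 0 T
  · rw [indicator_of_mem hs]
    rcases le_total (b s ω) k with h1 | h1
    · rw [min_eq_left h1]
      rcases le_total (-(k : ℝ)) (b s ω) with h2 | h2
      · rw [max_eq_right h2]; simpa using sq_nonneg (b s ω)
      · rw [max_eq_left h2]; nlinarith
    · rw [min_eq_right h1, max_eq_right (by linarith)]; nlinarith
  · rw [indicator_of_notMem hs, sub_zero]

lemma tendsto_lintegral_sq_sub_truncate {b : ℝ → Ω → ℝ} (hb : Measurable (Function.uncurry b))
    {T : ℝ} {ω : Ω} (hω : ∫⁻ s in Ioc 0 T, ENNReal.ofReal (b s ω ^ 2) < ⊤) :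
    Tendsto (fun k => ∫⁻ s in Ioc 0 T, ENNReal.ofReal ((b s ω - truncate b T k s ω) ^ 2))
      atTop (𝓝 0) := by
  have hbω : Measurable fun s => b s ω :=
    hb.comp (g := Function.uncurry b) (f := fun s : ℝ => (s, ω)) (by fun_prop)
  have key := tendsto_lintegral_of_dominated_convergence (μ := volume.restrict (Ioc 0 T))
    (F := fun k s => ENNReal.ofReal ((b s ω - truncate b T k s ω) ^ 2)) (f := fun _ => 0)
    (fun s => ENNReal.ofReal (b s ω ^ 2)) ?_ ?_ hω.ne ?_
  · simpa using key
  · intro k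
    have : Measurable fun s => truncate b T k s ω :=
      (measurable_truncate hb T k).comp (g := Function.uncurry (truncate b T k))
        (f := fun s : ℝ => (s, ω)) (by fun_prop)
    fun_prop
  · exact fun k => Eventually.of_forall fun s =>
      ENNReal.ofReal_le_ofReal (sq_sub_truncate_le b T k s ω)
  · refine (ae_restrict_iff' measurableSet_Ioc).2 (Eventually.of_forall fun s hs => ?_)
    obtain ⟨k₀, hk₀⟩ := exists_nat_ge |b s ω|
    refine tendsto_const_nhds.congr' ?_
    filter_upwards [eventually_ge_atTop k₀] with k hk
    have hk' : |b s ω| ≤ k := hk₀.trans (by exact_mod_cast hk)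
    unfold truncate
    rw [indicator_of_mem hs, min_eq_left (abs_le.1 hk').2, max_eq_right (abs_le.1 hk').1]
    simp

/-- Density of simple processes: every `b ∈ L²` is approximated on `(0, T]` by simple processes in
`H²` whose grids end before `T`, so that the elementary formula determines their integral at time
`T`. -/
lemma exists_simple_approx (P : Measure Ω) [IsProbabilityMeasure P] {F : Filtration ℝ mΩ}
    {b : ℝ → Ω → ℝ} (hb : MemL2 P F b) {T : ℝ} (hT : 0 < T) :
    ∃ bs : ℕ → ℝ → Ω → ℝ,
      (∀ k, MemH2 P F (bs k) ∧ ∃ n t, IsSimpleWith F (bs k) n t ∧ t n ≤ T) ∧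
      TendstoInMeasure P (fun k ω => ∫ s in Ioc (0 : ℝ) T, (b s ω - bs k s ω) ^ 2) atTop
        (fun _ => (0 : ℝ)) := by
  -- the `k`-th approximant is within `ε k` of the `k`-th truncation, with `∑ ε k < 1`
  obtain ⟨ε, hε0, hεsum⟩ := ENNReal.exists_pos_sum_of_countable' (ε := 1) one_ne_zero ℕ
  choose bs hH hS hE using fun k : ℕ => exists_simple_approx_bounded P hT
    (measurable_truncate hb.1 T k) (adapted_truncate hb.2.1 T k) (abs_truncate_le b T k)
    (fun s hs ω => by unfold truncate; exact indicator_of_notMem hs _) (hε0 k).ne'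
  refine ⟨bs, fun k => ⟨hH k, hS k⟩, ?_⟩
  have hswap : ∀ {g : ℝ → Ω → ℝ}, Measurable (Function.uncurry g) →
      Measurable fun p : Ω × ℝ => g p.2 p.1 := fun {g} hg =>
    hg.comp (g := Function.uncurry g) (f := fun p : Ω × ℝ => (p.2, p.1)) (by fun_prop)
  have hbm := hswap hb.1
  have hbsm := fun k => hswap (hH k).1
  have htm := fun k => hswap (measurable_truncate hb.1 T k)
  have hsec : ∀ {g : ℝ → Ω → ℝ}, (Measurable fun p : Ω × ℝ => g p.2 p.1) → ∀ ω,
      Measurable fun s => g s ω := fun {g} hg ω =>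
    hg.comp (f := fun s : ℝ => (ω, s)) (by fun_prop)
  refine tendstoInMeasure_of_tendsto_ae (fun k => ?_) ?_
  · refine StronglyMeasurable.aestronglyMeasurable ?_
    refine StronglyMeasurable.integral_prod_right (f := fun ω s => (b s ω - bs k s ω) ^ 2) ?_
    exact ((hbm.sub (hbsm k)).pow_const 2).stronglyMeasurable
  have hBm : ∀ k, Measurable fun ω =>
      ∫⁻ s in Ioc 0 T, ENNReal.ofReal ((truncate b T k s ω - bs k s ω) ^ 2) := fun k =>
    Measurable.lintegral_prod_right' (f := fun p : Ω × ℝ =>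
      ENNReal.ofReal ((truncate b T k p.2 p.1 - bs k p.2 p.1) ^ 2))
      (((htm k).sub (hbsm k)).pow_const 2).ennreal_ofReal
  -- the errors have summable expectations, hence they tend to zero almost surely
  have hBsum : ∀ᵐ ω ∂P,
      ∑' k, ∫⁻ s in Ioc 0 T, ENNReal.ofReal ((truncate b T k s ω - bs k s ω) ^ 2) < ⊤ := by
    refine ae_lt_top (Measurable.tsum hBm) (ne_of_lt ?_)
    rw [lintegral_tsum fun k => (hBm k).aemeasurable]
    exact (ENNReal.tsum_le_tsum hE).trans_lt (hεsum.trans ENNReal.one_lt_top)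
  filter_upwards [hb.2.2 T hT.le, hBsum] with ω hω hB
  have hA := tendsto_lintegral_sq_sub_truncate hb.1 hω
  have hB0 := ENNReal.tendsto_atTop_zero_of_tsum_ne_top hB.ne
  have hAB := (ENNReal.Tendsto.const_mul (a := 2) hA (by simp)).add
    (ENNReal.Tendsto.const_mul (a := 2) hB0 (by simp))
  simp only [mul_zero, add_zero] at hAB
  have hL : Tendsto (fun k => ∫⁻ s in Ioc 0 T, ENNReal.ofReal ((b s ω - bs k s ω) ^ 2))
      atTop (𝓝 0) := by
    refine tendsto_of_tendsto_of_tendsto_of_le_of_le tendsto_const_nhds hAB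
      (fun _ => zero_le) fun k => ?_
    have h1 := hsec hbm ω
    have h2 := hsec (htm k) ω
    have h3 := hsec (hbsm k) ω
    rw [← lintegral_const_mul _ (by fun_prop), ← lintegral_const_mul _ (by fun_prop),
      ← lintegral_add_left (by fun_prop)]
    refine lintegral_mono fun s => ?_
    rw [← ENNReal.ofReal_ofNat 2, ← ENNReal.ofReal_mul (by norm_num),
      ← ENNReal.ofReal_mul (by norm_num), ← ENNReal.ofReal_add (by positivity) (by positivity)]
    refine ENNReal.ofReal_le_ofReal ?_
    nlinarith [sq_nonneg ((b s ω - truncate b T k s ω) - (truncate b T k s ω - bs k s ω))]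
  have hR := (ENNReal.tendsto_toReal ENNReal.zero_ne_top).comp hL
  refine hR.congr fun k => ?_
  have h1 := hsec hbm ω
  have h3 := hsec (hbsm k) ω
  rw [integral_eq_lintegral_of_nonneg_ae (Eventually.of_forall fun s => sq_nonneg _)
    (Measurable.aestronglyMeasurable (by fun_prop))]
  rfl

/-- Uniqueness: two stochastic integral mappings assign indistinguishable processes
to each `b ∈ L²`. -/
theorem stochasticIntegralMap_indistinguishable
    (P : Measure Ω) [IsProbabilityMeasure P] [P.IsComplete]
    (F : Filtration ℝ mΩ) (hF : AugmentedFiltration P F)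
    (W : ℝ → Ω → ℝ) (hW : IsWienerProcess P F W)
    (I J : (ℝ → Ω → ℝ) → ℝ → Ω → ℝ)
    (hI : IsStochasticIntegralMap P F W I) (hJ : IsStochasticIntegralMap P F W J) :
    ∀ b, MemL2 P F b → ∀ᵐ ω ∂P, ∀ u : ℝ, 0 ≤ u → I b u ω = J b u ω := by
  intro b hb
  have hpt : ∀ u : ℝ, 0 < u → ∀ᵐ ω ∂P, I b u ω = J b u ω := by
    intro u hu
    obtain ⟨bs, hbs, hconv⟩ := exists_simple_approx P hb hu
    have hsimple : ∀ k, IsSimpleProcess F (bs k) ∧ MemH2 P F (bs k) := fun k =>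
      ⟨let ⟨n, t, h, _⟩ := (hbs k).2; ⟨n, t, h⟩, (hbs k).1⟩
    have hIlim := hI.2.2 u hu.le b hb bs hsimple hconv
    have hJlim := hJ.2.2 u hu.le b hb bs hsimple hconv
    refine tendstoInMeasure_ae_unique hIlim (hJlim.congr_left fun k => ?_)
    obtain ⟨hH, n, t, hS, ht⟩ := hbs k
    filter_upwards [hI.2.1 _ n t hH.memL2 hS u ht, hJ.2.1 _ n t hH.memL2 hS u ht] with ω h1 h2
    exact h2.trans h1.symm
  have hq : ∀ᵐ ω ∂P, ∀ q : ℚ, 0 < (q : ℝ) → I b q ω = J b q ω := by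
    rw [ae_all_iff]
    intro q
    by_cases h : 0 < (q : ℝ)
    · filter_upwards [hpt q h] with ω hω _ using hω
    · exact Eventually.of_forall fun _ h' => absurd h' h
  filter_upwards [hq] with ω hω u hu
  -- the positive rationals are dense in `[0, ∞)`, and both paths are continuous
  have hcl : IsClosed {v : ℝ | I b v ω = J b v ω} :=
    isClosed_eq ((hI.1 b hb).2 ω) ((hJ.1 b hb).2 ω)
  refine hcl.closure_subset (Metric.mem_closure_iff.2 fun ε hε => ?_)
  obtain ⟨q, hq1, hq2⟩ := exists_rat_btwn (show u < u + ε by linarith)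
  refine ⟨q, hω q (by linarith), ?_⟩
  rw [Real.dist_eq, abs_sub_comm, abs_of_pos (by linarith)]
  linarith
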